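/- Cross-section of the Marsden–Weinstein fibration, positive type: let p, v ∈ ℝ^{2,1} with C₁ := ⟨p,p⟩ > 0 and C₂ := ⟨p,v⟩, and let u ∈ ℝ^{2,1} satisfy ⟨u,u⟩ = 1 and ⟨p,u⟩ = 0. Define A₂ := p/√C₁, A₁ := (A₂×u + u)/√2, A₃ := (A₂×u − u)/√2, and Q := −(1/C₁) p×v. Then ⟨Aᵢ,Aⱼ⟩ = gᵢⱼ for i,j ∈ {1,2,3}, and with A the 3×3 matrix with columns A₁,A₂,A₃ and μ = (√C₁ e₂, (C₂/√C₁) e₂): A(√C₁ e₂) = p and A((C₂/√C₁) e₂) − (A(√C₁ e₂))×Q = v; that is, the coadjoint action of g = (Q,A) sends the standard form μ to (p,v). -/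

import Mathlib

/-!
The Lorentzian cross product satisfies the Lagrange identity
`⟨v×w, v×w⟩ = ⟨v,w⟩² − ⟨v,v⟩⟨w,w⟩` and the triple product identity
`v×(v×w) = ⟨v,v⟩ w − ⟨v,w⟩ v`, with signs opposite to the Euclidean ones because the Gram matrix
has determinant `−1`.

By the first identity, for the orthonormal spacelike vectors `A₂` and `u` the vector `A₂×u` is
orthogonal to both and has square `−1`; so `(A₂×u ± u)/√2` are null vectors with product `−1`,
both orthogonal to `A₂` (`lprod_frame`). Since `A e₂ = A₂ = p/√C₁`, one gets `A(√C₁ e₂) = p` and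
`A((C₂/√C₁) e₂) = (C₂/C₁) p`, while the second identity gives
`−p×Q = (1/C₁) p×(p×v) = v − (C₂/C₁) p`; the sum of the last two is `v`.
-/


open Set

noncomputable section

/-- The Lorentzian inner product on `ℝ^{2,1}`:
`⟨v,w⟩ = −(v¹w³ + v³w¹) + v²w²` (components are 0-indexed). -/
def lprod (v w : Fin 3 → ℝ) : ℝ := -(v 0 * w 2 + v 2 * w 0) + v 1 * w 1

/-- A vector is future-directed if `⟨v, e₁ + e₃⟩ < 0`. -/
def futDir (v : Fin 3 → ℝ) : Prop := lprod v ![1, 0, 1] < 0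

/-- The Gram matrix of the Lorentzian inner product. -/
def gram : Matrix (Fin 3) (Fin 3) ℝ := !![0, 0, -1; 0, 1, 0; -1, 0, 0]

/-- The cross product on `ℝ^{2,1}`, determined by `⟨v × w, u⟩ = det (v, w, u)`. -/
def lcross (v w : Fin 3 → ℝ) : Fin 3 → ℝ :=
  ![-(v 0 * w 1 - v 1 * w 0), v 2 * w 0 - v 0 * w 2, -(v 1 * w 2 - v 2 * w 1)]

lemma lprod_comm (v w : Fin 3 → ℝ) : lprod v w = lprod w v := by
  simp only [lprod]; ring

lemma lprod_smul_left (c : ℝ) (v w : Fin 3 → ℝ) : lprod (c • v) w = c * lprod v w := by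
  simp only [lprod, Pi.smul_apply, smul_eq_mul]; ring

lemma lprod_smul_right (c : ℝ) (v w : Fin 3 → ℝ) : lprod v (c • w) = c * lprod v w := by
  simp only [lprod, Pi.smul_apply, smul_eq_mul]; ring

lemma lprod_add_left (v v' w : Fin 3 → ℝ) : lprod (v + v') w = lprod v w + lprod v' w := by
  simp only [lprod, Pi.add_apply]; ring

lemma lprod_add_right (v w w' : Fin 3 → ℝ) : lprod v (w + w') = lprod v w + lprod v w' := by
  simp only [lprod, Pi.add_apply]; ring

lemma lprod_sub_left (v v' w : Fin 3 → ℝ) : lprod (v - v') w = lprod v w - lprod v' w := by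
  simp only [lprod, Pi.sub_apply]; ring

lemma lprod_sub_right (v w w' : Fin 3 → ℝ) : lprod v (w - w') = lprod v w - lprod v w' := by
  simp only [lprod, Pi.sub_apply]; ring

lemma lprod_lcross_left (v w : Fin 3 → ℝ) : lprod v (lcross v w) = 0 := by
  simp [lprod, lcross]; ring

lemma lprod_lcross_right (v w : Fin 3 → ℝ) : lprod w (lcross v w) = 0 := by
  simp [lprod, lcross]; ring

/-- The Lorentzian Lagrange identity. -/
lemma lprod_lcross_lcross (v w : Fin 3 → ℝ) :
    lprod (lcross v w) (lcross v w) = lprod v w ^ 2 - lprod v v * lprod w w := by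
  simp [lprod, lcross]; ring

/-- The Lorentzian triple product identity. -/
lemma lcross_lcross (v w : Fin 3 → ℝ) :
    lcross v (lcross v w) = lprod v v • w - lprod v w • v := by
  ext i
  fin_cases i <;> simp [lprod, lcross] <;> ring

lemma lcross_neg_smul (c : ℝ) (v w : Fin 3 → ℝ) :
    lcross v (-(c • w)) = -(c • lcross v w) := by
  ext i
  fin_cases i <;> simp [lcross] <;> ring

/-- Orthonormal spacelike vectors `a`, `u` give rise to a frame `(a×u + u)/√2`, `a`,
`(a×u − u)/√2` whose Gram matrix is the standard one. -/
lemma lprod_frame (a u : Fin 3 → ℝ) (ha : lprod a a = 1) (hu : lprod u u = 1)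
    (hau : lprod a u = 0) (i j : Fin 3) :
    lprod (![(Real.sqrt 2)⁻¹ • (lcross a u + u), a, (Real.sqrt 2)⁻¹ • (lcross a u - u)] i)
      (![(Real.sqrt 2)⁻¹ • (lcross a u + u), a, (Real.sqrt 2)⁻¹ • (lcross a u - u)] j)
      = gram i j := by
  have hcc : lprod (lcross a u) (lcross a u) = -1 := by
    rw [lprod_lcross_lcross, ha, hu, hau]; norm_num
  have hac := lprod_lcross_left a u
  have huc := lprod_lcross_right a u
  have hca := (lprod_comm (lcross a u) a).trans hac
  have hcu := (lprod_comm (lcross a u) u).trans huc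
  have hua := (lprod_comm u a).trans hau
  have hs : (Real.sqrt 2)⁻¹ * (Real.sqrt 2)⁻¹ = 1 / 2 := by
    rw [← mul_inv, Real.mul_self_sqrt (by norm_num)]; norm_num
  fin_cases i <;> fin_cases j <;>
    simp [gram, lprod_smul_left, lprod_smul_right, lprod_add_left, lprod_add_right,
      lprod_sub_left, lprod_sub_right, hcc, hac, huc, hca, hcu, hua, hau, ha, hu] <;>
    linarith

/-- The columns of a matrix are its values on the basis: the case of the second basis vector. -/
lemma mulVec_smul_e₂ (c : ℝ) (a₁ a₂ a₃ : Fin 3 → ℝ) :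
    (Matrix.of fun i j => ![a₁, a₂, a₃] j i).mulVec (c • ![0, 1, 0]) = c • a₂ := by
  ext i
  simp [Matrix.mulVec, dotProduct, Fin.sum_univ_three, mul_comm]

/-- Cross-section of the Marsden–Weinstein fibration, positive type:
for `⟨p,p⟩ > 0` and a unit vector `u` Lorentz-orthogonal to `p`, the frame
`A₂ = p/√C₁`, `A₁ = (A₂×u + u)/√2`, `A₃ = (A₂×u − u)/√2` together with
`Q = −(1/C₁) p×v` is Lorentz-orthonormal and the coadjoint action of `(Q,A)` carries the
standard form `μ = (√C₁ e₂, (C₂/√C₁) e₂)` to `(p,v)`. -/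
theorem cross_section_positive_type (p v u : Fin 3 → ℝ)
    (hC₁ : 0 < lprod p p) (hu : lprod u u = 1) (hpu : lprod p u = 0) :
    let C₁ : ℝ := lprod p p
    let C₂ : ℝ := lprod p v
    let A₂ : Fin 3 → ℝ := (Real.sqrt C₁)⁻¹ • p
    let A₁ : Fin 3 → ℝ := (Real.sqrt 2)⁻¹ • (lcross A₂ u + u)
    let A₃ : Fin 3 → ℝ := (Real.sqrt 2)⁻¹ • (lcross A₂ u - u)
    let Q : Fin 3 → ℝ := -(C₁⁻¹ • lcross p v)
    let A : Matrix (Fin 3) (Fin 3) ℝ := Matrix.of fun i j => ![A₁, A₂, A₃] j i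
    let m₁ : Fin 3 → ℝ := Real.sqrt C₁ • ![0, 1, 0]
    let m₂ : Fin 3 → ℝ := (C₂ / Real.sqrt C₁) • ![0, 1, 0]
    (∀ i j, lprod (fun r => A r i) (fun r => A r j) = gram i j) ∧
    A.mulVec m₁ = p ∧
    A.mulVec m₂ - lcross (A.mulVec m₁) Q = v := by
  intro C₁ C₂ A₂ A₁ A₃ Q A m₁ m₂
  have hC : C₁ ≠ 0 := hC₁.ne'
  have hs : Real.sqrt C₁ ≠ 0 := (Real.sqrt_pos.2 hC₁).ne'
  have hss : Real.sqrt C₁ * Real.sqrt C₁ = C₁ := Real.mul_self_sqrt hC₁.le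
  have h₁ : A.mulVec m₁ = p := by
    simp only [A, m₁, mulVec_smul_e₂, A₂, smul_inv_smul₀ hs]
  refine ⟨?_, h₁, ?_⟩
  · have ha : lprod A₂ A₂ = 1 := by
      simp only [A₂, lprod_smul_left, lprod_smul_right]
      rw [← mul_assoc, ← mul_inv, hss]
      exact inv_mul_cancel₀ hC
    have hau : lprod A₂ u = 0 := by
      simp only [A₂, lprod_smul_left, hpu, mul_zero]
    exact lprod_frame A₂ u ha hu hau
  · have h₂ : A.mulVec m₂ = (C₁⁻¹ * C₂) • p := by
      simp only [A, m₂, mulVec_smul_e₂, A₂, smul_smul]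
      rw [div_eq_mul_inv, mul_assoc, ← mul_inv, hss, mul_comm]
    have hQ : lcross p Q = -(C₁⁻¹ • (C₁ • v - C₂ • p)) := by
      rw [lcross_neg_smul, lcross_lcross]
    rw [h₁, h₂, hQ, smul_sub, inv_smul_smul₀ hC, smul_smul]
    abel
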